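/- Closed orbit-counting formula: |D_n / S_n| = ∑_{λ ⊢ n} (∏_k k^{m_k} m_k!)^{-1} · 4^{∑_k m_k} · 2^{f(λ)}, where the sum runs over partitions λ of n with m_k parts of size k, and f(λ) = ∑_k (m_k⌊k/2⌋ + k·C(m_k,2)) + ∑_{k₁<k₂} m_{k₁} m_{k₂} gcd(k₁,k₂). -/

import Mathlib

open BigOperators

/-- The exponent data of the diagonal Clifford group `D_n ≅ ℤ₄ⁿ × ℤ₂^{C(n,2)}`. -/
def DElem (n : ℕ) :=
  {ab : (Fin n → ZMod 4) × (Sym2 (Fin n) → ZMod 2) // ∀ s, s.IsDiag → ab.2 s = 0}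

/-- The number of orbits of the symmetric group acting on `D_n` by qubit permutations. -/
noncomputable def diagOrbitCount (n : ℕ) : ℕ :=
  Nat.card (Set.range fun x : DElem n =>
    {y : DElem n | ∃ σ : Equiv.Perm (Fin n),
      (∀ j, y.1.1 j = x.1.1 (σ⁻¹ j)) ∧ (∀ s, y.1.2 s = x.1.2 (Sym2.map (⇑σ⁻¹) s))})

/-- Multiplicity `m_k` of parts of size `k` in a partition `λ ⊢ n`. -/
def mPart (n : ℕ) (lam : Nat.Partition n) (k : ℕ) : ℕ := Multiset.count k lam.parts

/-- `f(λ) = ∑_k (m_k ⌊k/2⌋ + k·C(m_k,2)) + ∑_{k₁<k₂} m_{k₁} m_{k₂} gcd(k₁,k₂)`. -/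
def fPart (n : ℕ) (lam : Nat.Partition n) : ℕ :=
  (∑ k ∈ Finset.Icc 1 n, (mPart n lam k * (k / 2) + k * Nat.choose (mPart n lam k) 2)) +
    ∑ k₁ ∈ Finset.Icc 1 n, ∑ k₂ ∈ Finset.Icc (k₁ + 1) n,
      mPart n lam k₁ * mPart n lam k₂ * Nat.gcd k₁ k₂

namespace Orb
open MulAction

section general
variable {G Z : Type} [Group G] [MulAction G Z] [Finite G] [Finite Z]

theorem burnside_cyclic (g : G) :
    orderOf g * Nat.card (orbitRel.Quotient (Subgroup.zpowers g) Z) =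
      ∑ i ∈ Finset.range (orderOf g), Nat.card {z : Z // g ^ (i + 1) • z = z} := by
  classical
  have := Fintype.ofFinite G
  have := Fintype.ofFinite Z
  have h := sum_card_fixedBy_eq_card_orbits_mul_card_group (Subgroup.zpowers g) Z
  rw [Fintype.card_zpowers, ← Equiv.sum_comp (finEquivZPowers (isOfFinOrder_of_finite g))] at h
  have h2 : ∀ i : Fin (orderOf g), Fintype.card (fixedBy Z (finEquivZPowers (isOfFinOrder_of_finite g) i))
      = Nat.card {z : Z // g ^ (i : ℕ) • z = z} := by
    intro i
    rw [← Nat.card_eq_fintype_card]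
    rfl
  simp only [h2] at h
  rw [Fin.sum_univ_eq_sum_range (fun i => Nat.card {z : Z // g ^ i • z = z})] at h
  rw [mul_comm, Nat.card_eq_fintype_card]
  have e1 := Finset.sum_range_succ (fun i => Nat.card {z : Z // g ^ i • z = z}) (orderOf g)
  have e2 := Finset.sum_range_succ' (fun i => Nat.card {z : Z // g ^ i • z = z}) (orderOf g)
  simp only [pow_orderOf_eq_one, pow_zero] at e1 e2
  refine Eq.trans h.symm ?_
  omega

def invFunEquiv (A : Type) (g : G) :
    {f : Z → A // ∀ z, f z = f (g⁻¹ • z)} ≃ (orbitRel.Quotient (Subgroup.zpowers g) Z → A) where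
  toFun f := Quotient.lift f.1 (by
    intro a b hab
    obtain ⟨⟨h, k, hk⟩, rfl⟩ := hab
    have key : ∀ (z : Z), f.1 (g • z) = f.1 z := fun z => by
      rw [f.2 (g • z), inv_smul_smul]
    have key2 : ∀ (m : ℤ) (z : Z), f.1 (g ^ m • z) = f.1 z := by
      intro m
      induction m using Int.induction_on with
      | zero => simp
      | succ i ih => intro z; rw [add_comm, zpow_add, mul_smul, zpow_one, key, ih]
      | pred i ih => 
        intro z
        rw [sub_eq_add_neg, add_comm, zpow_add, mul_smul, zpow_neg_one, ← f.2, ih]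
    subst hk
    exact key2 k b)
  invFun F := ⟨fun z => F (Quotient.mk _ z), fun z => by
    refine congrArg F (Quotient.sound ?_)
    exact ⟨⟨g, Subgroup.mem_zpowers g⟩, by simp [Subgroup.smul_def]⟩⟩
  left_inv f := rfl
  right_inv F := by
    funext q
    induction q using Quotient.inductionOn with
    | h z => rfl

theorem card_invFun (A : Type) (g : G) :
    Nat.card {f : Z → A // ∀ z, f z = f (g⁻¹ • z)} =
      Nat.card A ^ Nat.card (orbitRel.Quotient (Subgroup.zpowers g) Z) := by
  rw [Nat.card_congr (invFunEquiv A g), Nat.card_fun]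

end general

section per
variable {X : Type} [Fintype X] [DecidableEq X]

open Equiv.Perm in
theorem pow_fix_iff (σ : Equiv.Perm X) (i : ℕ) (x : X) :
    (σ ^ i) x = x ↔ orderOf (cycleOf σ x) ∣ i := by
  by_cases h : σ x = x
  · rw [(cycleOf_eq_one_iff σ).2 h]
    simp [Equiv.Perm.pow_apply_eq_self_of_apply_eq_self h]
  · have hc := isCycle_cycleOf σ h
    rw [orderOf_dvd_iff_pow_eq_one, hc.pow_eq_one_iff, ← cycleOf_pow_apply_self]
    constructor
    · intro hx
      exact ⟨x, by simpa using h, hx⟩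
    · intro hx
      have := hc.pow_eq_one_iff.2 hx
      rw [this]; rfl

open Equiv.Perm in
theorem sum_period (σ : Equiv.Perm X) (f : ℕ → ℕ) :
    ∑ x, f (orderOf (cycleOf σ x)) = (σ.partition.parts.map (fun k => k * f k)).sum := by
  rw [parts_partition, Multiset.map_add, Multiset.sum_add, Multiset.map_replicate,
    Multiset.sum_replicate, ← Finset.sum_add_sum_compl σ.support]
  congr 1
  · rw [← Finset.sum_fiberwise_of_maps_to (t := σ.cycleFactorsFinset) (g := fun x => cycleOf σ x)
      (fun x hx => cycleOf_mem_cycleFactorsFinset_iff.2 hx), cycleType_def, Multiset.map_map]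
    apply Finset.sum_congr rfl
    intro c hc
    have e : σ.support.filter (fun x => cycleOf σ x = c) = c.support := by
      ext x
      simp only [Finset.mem_filter]
      constructor
      · rintro ⟨hx, rfl⟩
        rw [mem_support_cycleOf_iff]
        exact ⟨SameCycle.refl _ _, hx⟩
      · intro hx
        exact ⟨mem_cycleFactorsFinset_support_le hc hx, (cycle_is_cycleOf hx hc).symm⟩
    rw [e, Finset.sum_congr (g := fun _ => f (c.support.card)) rfl]
    · simp
    · intro x hx
      rw [← cycle_is_cycleOf hx hc, ((mem_cycleFactorsFinset_iff.1 hc).1).orderOf]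
  · rw [Finset.sum_congr (g := fun _ => f 1) rfl]
    · simp [Finset.card_compl]
    · intro x hx
      rw [(cycleOf_eq_one_iff σ).2 (by simpa using hx), orderOf_one]

theorem sum_dvd (N d : ℕ) : ∑ i ∈ Finset.range N, (if d ∣ i + 1 then 1 else 0) = N / d := by
  rw [← Nat.card_multiples, Finset.card_filter]

/-- number of fixed points -/
def F (g : Equiv.Perm X) : ℕ := ∑ x, if g x = x then 1 else 0

theorem F_pow (σ : Equiv.Perm X) (i : ℕ) :
    F (σ ^ i) = ∑ x, if orderOf (Equiv.Perm.cycleOf σ x) ∣ i then 1 else 0 := by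
  simp only [F, pow_fix_iff]

theorem part_dvd (σ : Equiv.Perm X) {k : ℕ} (hk : k ∈ σ.partition.parts) : 0 < k ∧ k ∣ orderOf σ := by
  refine ⟨σ.partition.parts_pos hk, ?_⟩
  rw [Equiv.Perm.parts_partition, Multiset.mem_add] at hk
  rcases hk with hk | hk
  · exact Equiv.Perm.dvd_of_mem_cycleType hk
  · rw [Multiset.eq_of_mem_replicate hk]; exact one_dvd _

theorem sum_F (σ : Equiv.Perm X) : ∑ i ∈ Finset.range (orderOf σ), F (σ ^ (i + 1)) =
    orderOf σ * σ.partition.parts.card := by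
  simp only [F_pow]
  rw [Finset.sum_comm]
  simp only [sum_dvd]
  rw [sum_period σ (fun k => orderOf σ / k)]
  rw [Multiset.map_congr (g := fun _ => orderOf σ) rfl]
  · simp [mul_comm]
  · intro k hk
    exact Nat.mul_div_cancel' (part_dvd σ hk).2

theorem sum_F_sq (σ : Equiv.Perm X) : ∑ i ∈ Finset.range (orderOf σ), F (σ ^ (i + 1)) ^ 2 =
    orderOf σ * (σ.partition.parts.map fun k => (σ.partition.parts.map fun l => Nat.gcd k l).sum).sum := by
  simp only [F_pow, sq, Finset.sum_mul_sum]
  rw [Finset.sum_comm]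
  simp only [← ite_and, mul_ite, mul_one, mul_zero]
  have : ∀ x : X, ∑ i ∈ Finset.range (orderOf σ), ∑ y, (if orderOf (σ.cycleOf y) ∣ i + 1 ∧ orderOf (σ.cycleOf x) ∣ i + 1 then 1 else 0)
     = (σ.partition.parts.map fun l => l * (orderOf σ / Nat.lcm (orderOf (σ.cycleOf x)) l)).sum := by
    intro x
    rw [Finset.sum_comm, ← sum_period]
    apply Finset.sum_congr rfl
    intro y _
    rw [← sum_dvd]
    simp only [Nat.lcm_dvd_iff, and_comm]
  simp only [this]
  rw [sum_period σ (fun k => (σ.partition.parts.map fun l => l * (orderOf σ / Nat.lcm k l)).sum), ← Multiset.sum_map_mul_left]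
  congr 1
  apply Multiset.map_congr rfl
  intro k hk
  rw [← Multiset.sum_map_mul_left, ← Multiset.sum_map_mul_left]
  congr 1
  apply Multiset.map_congr rfl
  intro l hl
  have h1 := part_dvd σ hk
  have h2 := part_dvd σ hl
  have h3 := Nat.mul_div_cancel' (Nat.lcm_dvd h1.2 h2.2)
  have h4 := Nat.gcd_mul_lcm k l
  calc k * (l * (orderOf σ / k.lcm l)) = (k * l) * (orderOf σ / k.lcm l) := by ring
    _ = k.gcd l * (k.lcm l * (orderOf σ / k.lcm l)) := by rw [← h4]; ring
    _ = _ := by rw [h3]; ring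

theorem dvd_two_mul_iff {d i : ℕ} : d ∣ 2 * i ↔ d / Nat.gcd 2 d ∣ i := by
  rcases Nat.even_or_odd' d with ⟨k, rfl | rfl⟩
  · simp [Nat.mul_dvd_mul_iff_left]
  · have : Nat.gcd 2 (2 * k + 1) = 1 := by simp
    rw [this, Nat.div_one]
    exact Nat.Coprime.dvd_mul_left (Nat.Coprime.symm this)

theorem sum_F_two (σ : Equiv.Perm X) : ∑ i ∈ Finset.range (orderOf σ), F ((σ ^ (i + 1)) ^ 2) =
    orderOf σ * (σ.partition.parts.map fun k => Nat.gcd 2 k).sum := by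
  simp only [← pow_mul, mul_comm _ 2]
  simp only [F_pow, dvd_two_mul_iff]
  rw [Finset.sum_comm]
  simp only [sum_dvd]
  rw [sum_period σ (fun k => orderOf σ / (k / Nat.gcd 2 k)), ← Multiset.sum_map_mul_left]
  congr 1
  apply Multiset.map_congr rfl
  intro k hk
  have h1 := part_dvd σ hk
  have h2 := Nat.div_mul_cancel (Nat.gcd_dvd_right 2 k)
  have h3 := Nat.mul_div_cancel' ((Nat.div_dvd_of_dvd (Nat.gcd_dvd_right 2 k)).trans h1.2)
  calc k * (orderOf σ / (k / Nat.gcd 2 k)) = Nat.gcd 2 k * ((k / Nat.gcd 2 k) * (orderOf σ / (k / Nat.gcd 2 k))) := by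
        conv_lhs => enter [1]; rw [← h2]
        ring
    _ = _ := by rw [h3, mul_comm]

/-- off-diagonal pairs -/
def Pr (X : Type) := {s : Sym2 X // ¬ s.IsDiag}

instance : Finite (Pr X) := by unfold Pr; infer_instance

theorem isDiag_map_iff (σ : Equiv.Perm X) (s : Sym2 X) : (Sym2.map σ s).IsDiag ↔ s.IsDiag := by
  induction s with
  | _ a b => simp

instance : MulAction (Equiv.Perm X) (Pr X) where
  smul σ s := ⟨Sym2.map σ s.1, by rw [isDiag_map_iff]; exact s.2⟩
  one_smul s := Subtype.ext (by
    show Sym2.map (fun x => x) s.1 = s.1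
    exact congrFun Sym2.map_id s.1)
  mul_smul σ τ s := Subtype.ext (by
    show Sym2.map (fun x => σ (τ x)) s.1 = Sym2.map σ (Sym2.map τ s.1)
    rw [Sym2.map_map]; rfl)

theorem smul_val (σ : Equiv.Perm X) (s : Pr X) : (σ • s).1 = Sym2.map σ s.1 := rfl

def gr (g : Equiv.Perm X) : SimpleGraph X where
  Adj x y := x ≠ y ∧ Sym2.map g s(x, y) = s(x, y)
  symm := ⟨fun x y h => ⟨h.1.symm, by rw [Sym2.eq_swap]; exact h.2⟩⟩
  loopless := ⟨fun x h => h.1 rfl⟩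

theorem gr_adj (g : Equiv.Perm X) (x y : X) : (gr g).Adj x y ↔
    x ≠ y ∧ ((g x = x ∧ g y = y) ∨ (g x = y ∧ g y = x)) := by
  simp [gr]

theorem fix_pairs (g : Equiv.Perm X) :
    2 * Nat.card {s : Pr X // g • s = s} + 2 * F g = F g ^ 2 + F (g ^ 2) := by
  classical
  have e : {s : Pr X // g • s = s} ≃ (gr g).edgeSet := 
    { toFun := fun s => ⟨s.1.1, by
        obtain ⟨⟨s, hs⟩, hs2⟩ := s
        have h3 := congrArg Subtype.val hs2
        change Sym2.map g s = s at h3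
        induction s with
        | _ a b => exact ⟨by simpa using hs, h3⟩⟩
      invFun := fun s => ⟨⟨s.1, (gr g).not_isDiag_of_mem_edgeSet s.2⟩, by
        obtain ⟨s, hs⟩ := s
        apply Subtype.ext
        change Sym2.map g s = s
        induction s with
        | _ a b => exact hs.2⟩
      left_inv := fun s => rfl
      right_inv := fun s => rfl }
  have h := (gr g).sum_degrees_eq_twice_card_edges
  rw [Nat.card_congr e, Nat.card_eq_fintype_card, ← SimpleGraph.edgeFinset_card, ← h]
  have hd : ∀ x, (gr g).degree x + 2 * (if g x = x then 1 else 0) =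
      (if g x = x then 1 else 0) * F g + (if (g ^ 2) x = x then 1 else 0) := by
    intro x
    by_cases hx : g x = x
    · have hx2 : (g ^ 2) x = x := by simp [sq, hx]
      rw [if_pos hx, if_pos hx2]
      have : (gr g).degree x + 1 = F g := by
        unfold F
        rw [← Finset.card_filter, ← SimpleGraph.card_neighborFinset_eq_degree]
        have : Finset.univ.filter (fun y => g y = y) = insert x ((gr g).neighborFinset x) := by
          ext y
          simp only [Finset.mem_filter, Finset.mem_univ, true_and, Finset.mem_insert,
            SimpleGraph.mem_neighborFinset, gr_adj]
          grind
        rw [this, Finset.card_insert_of_notMem (by simp)]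
      omega
    · rw [if_neg hx, ← SimpleGraph.card_neighborFinset_eq_degree]
      have : (gr g).neighborFinset x = if (g ^ 2) x = x then {g x} else ∅ := by
        ext y
        rw [SimpleGraph.mem_neighborFinset, gr_adj]
        split_ifs with h2 <;> simp [sq] at h2 ⊢ <;> grind
      rw [this]
      split_ifs <;> simp
  have hs := Finset.sum_congr rfl (fun x (_ : x ∈ Finset.univ) => hd x)
  rw [Finset.sum_add_distrib, Finset.sum_add_distrib, ← Finset.mul_sum, ← Finset.sum_mul] at hs
  rw [sq (F g)]
  exact hs

theorem orbits_X (σ : Equiv.Perm X) :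
    Nat.card (orbitRel.Quotient (Subgroup.zpowers σ) X) = σ.partition.parts.card := by
  have h := burnside_cyclic (Z := X) σ
  have h2 : ∀ i, Nat.card {z : X // σ ^ (i + 1) • z = z} = F (σ ^ (i + 1)) := by
    intro i
    rw [F, ← Finset.card_filter, Nat.card_eq_fintype_card, Fintype.card_subtype]
    rfl
  simp only [h2, sum_F] at h
  exact Nat.eq_of_mul_eq_mul_left (orderOf_pos σ) h

theorem orbits_Pr (σ : Equiv.Perm X) :
    2 * Nat.card (orbitRel.Quotient (Subgroup.zpowers σ) (Pr X)) + 2 * σ.partition.parts.card =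
     (σ.partition.parts.map fun k => (σ.partition.parts.map fun l => Nat.gcd k l).sum).sum
      + (σ.partition.parts.map fun k => Nat.gcd 2 k).sum := by
  have h := burnside_cyclic (Z := Pr X) σ
  apply Nat.eq_of_mul_eq_mul_left (orderOf_pos σ)
  rw [mul_add, mul_add, ← sum_F_sq, ← sum_F_two, mul_left_comm, h, mul_left_comm, ← sum_F,
    Finset.mul_sum, Finset.mul_sum, ← Finset.sum_add_distrib, ← Finset.sum_add_distrib]
  exact Finset.sum_congr rfl fun i _ => fix_pairs _

end per
end Orb

namespace Orb
open MulAction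

theorem part_mem_Icc {n : ℕ} (lam : Nat.Partition n) {k : ℕ} (hk : k ∈ lam.parts) :
    k ∈ Finset.Icc 1 n :=
  Finset.mem_Icc.2 ⟨lam.parts_pos hk, lam.le_of_mem_parts hk⟩

theorem parts_sum_map {n : ℕ} (lam : Nat.Partition n) (f : ℕ → ℕ) :
    (lam.parts.map f).sum = ∑ k ∈ Finset.Icc 1 n, mPart n lam k * f k := by
  rw [Finset.sum_multiset_map_count]
  simp only [smul_eq_mul]
  apply Finset.sum_subset
  · intro k hk
    exact part_mem_Icc lam (Multiset.mem_toFinset.1 hk)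
  · intro k _ hk
    rw [Multiset.mem_toFinset] at hk
    simp [Multiset.count_eq_zero_of_notMem hk]

theorem sum_sum_split (n : ℕ) (h : ℕ → ℕ → ℕ) (hs : ∀ a b, h a b = h b a) :
    ∑ k ∈ Finset.Icc 1 n, ∑ l ∈ Finset.Icc 1 n, h k l =
      ∑ k ∈ Finset.Icc 1 n, h k k +
        2 * ∑ k ∈ Finset.Icc 1 n, ∑ l ∈ Finset.Icc (k + 1) n, h k l := by
  have h1 : ∀ k ∈ Finset.Icc 1 n, ∑ l ∈ Finset.Icc 1 n, h k l =
      h k k + ∑ l ∈ Finset.Icc (k + 1) n, h k l + ∑ l ∈ Finset.Icc 1 n, if l < k then h k l else 0 := by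
    intro k hk
    rw [Finset.mem_Icc] at hk
    have e1 : ∑ l ∈ Finset.Icc (k + 1) n, h k l = ∑ l ∈ Finset.Icc 1 n, if k < l then h k l else 0 := by
      rw [← Finset.sum_filter]
      apply Finset.sum_congr _ (fun _ _ => rfl)
      ext l; simp; omega
    have e2 : h k k = ∑ l ∈ Finset.Icc 1 n, if k = l then h k l else 0 := by
      rw [Finset.sum_ite_eq, if_pos (Finset.mem_Icc.2 hk)]
    rw [e1, e2, ← Finset.sum_add_distrib, ← Finset.sum_add_distrib]
    apply Finset.sum_congr rfl
    intro l _
    rcases lt_trichotomy k l with h | h | h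
    · simp [h, h.ne, h.not_gt]
    · simp [h]
    · simp [h, h.ne', h.not_gt]
  rw [Finset.sum_congr rfl h1, Finset.sum_add_distrib, Finset.sum_add_distrib, two_mul, add_assoc]
  congr 2
  rw [Finset.sum_comm]
  apply Finset.sum_congr rfl
  intro l hl
  rw [Finset.mem_Icc] at hl
  rw [← Finset.sum_filter]
  apply Finset.sum_congr _ (fun _ _ => hs _ _)
  ext k; simp; omega

theorem two_choose (m : ℕ) : 2 * Nat.choose m 2 + m = m * m := by
  induction m with
  | zero => rfl
  | succ m ih => 
    rw [Nat.choose_succ_succ' m 1, Nat.choose_one_right]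
    nlinarith

theorem two_gcd (k : ℕ) : 2 * (k / 2) + 2 = k + Nat.gcd 2 k := by
  rcases Nat.even_or_odd' k with ⟨j, rfl | rfl⟩
  · simp
  · have : Nat.gcd 2 (2 * j + 1) = 1 := by simp
    rw [this]; omega

theorem fPart_eq {n : ℕ} (lam : Nat.Partition n) :
    2 * fPart n lam + 2 * lam.parts.card =
     (lam.parts.map fun k => (lam.parts.map fun l => Nat.gcd k l).sum).sum
      + (lam.parts.map fun k => Nat.gcd 2 k).sum := by
  have hc : lam.parts.card = ∑ k ∈ Finset.Icc 1 n, mPart n lam k := by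
    have := parts_sum_map lam (fun _ => 1)
    simpa using this
  simp only [parts_sum_map, Finset.mul_sum]
  have hh := sum_sum_split n (fun k l => mPart n lam k * mPart n lam l * Nat.gcd k l)
    (fun a b => by rw [Nat.gcd_comm, mul_comm (mPart n lam a)])
  simp only [← mul_assoc]
  rw [hh, hc, fPart, mul_add]
  suffices 2 * ∑ k ∈ Finset.Icc 1 n, (mPart n lam k * (k / 2) + k * (mPart n lam k).choose 2) +
     2 * ∑ k ∈ Finset.Icc 1 n, mPart n lam k =
     ∑ k ∈ Finset.Icc 1 n, mPart n lam k * mPart n lam k * k.gcd k + ∑ k ∈ Finset.Icc 1 n, mPart n lam k * Nat.gcd 2 k by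
    omega
  rw [Finset.mul_sum, Finset.mul_sum, ← Finset.sum_add_distrib, ← Finset.sum_add_distrib]
  apply Finset.sum_congr rfl
  intro k _
  rw [Nat.gcd_self, ← two_choose]
  have := two_gcd k
  generalize mPart n lam k = m
  linear_combination m * this

/-- cycle partition as a partition of n -/
def ptn {n : ℕ} (σ : Equiv.Perm (Fin n)) : Nat.Partition n :=
  ⟨σ.partition.parts, σ.partition.parts_pos, by simpa using σ.partition.parts_sum⟩

theorem ptn_eq_iff {n : ℕ} (σ : Equiv.Perm (Fin n)) (lam : Nat.Partition n) :
    ptn σ = lam ↔ σ.cycleType = lam.parts.filter (2 ≤ ·) := by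
  constructor
  · rintro rfl
    exact (Equiv.Perm.filter_parts_partition_eq_cycleType).symm
  · intro h
    have h2 := Equiv.Perm.filter_parts_partition_eq_cycleType (σ := σ)
    have key : ∀ mu : Nat.Partition n, mu.parts = mu.parts.filter (2 ≤ ·) +
        Multiset.replicate (n - (mu.parts.filter (2 ≤ ·)).sum) 1 := by
      intro mu
      have e1 := Multiset.filter_add_not (2 ≤ ·) mu.parts
      have e2 : mu.parts.filter (fun k => ¬ 2 ≤ k) =
          Multiset.replicate (mu.parts.filter (fun k => ¬ 2 ≤ k)).card 1 := by
        rw [Multiset.eq_replicate]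
        refine ⟨rfl, fun b hb => ?_⟩
        rw [Multiset.mem_filter] at hb
        have := mu.parts_pos hb.1
        omega
      have e3 := mu.parts_sum
      rw [← e1, Multiset.sum_add, e2, Multiset.sum_replicate, smul_eq_mul, mul_one] at e3
      conv_lhs => rw [← e1, e2]
      congr 2
      omega
    apply Nat.Partition.ext
    rw [key (ptn σ), key lam, ← h, ← h2]
    rfl

theorem card_ptn {n : ℕ} (lam : Nat.Partition n) :
    (Finset.univ.filter (fun σ : Equiv.Perm (Fin n) => ptn σ = lam)).card *
      (∏ k ∈ Finset.Icc 1 n, (k ^ mPart n lam k * Nat.factorial (mPart n lam k))) =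
      Nat.factorial n := by
  simp only [ptn_eq_iff]
  have h := Equiv.Perm.card_of_cycleType_mul_eq (Fin n) (lam.parts.filter (2 ≤ ·))
  have e1 := Multiset.filter_add_not (2 ≤ ·) lam.parts
  have e2 : lam.parts.filter (fun k => ¬ 2 ≤ k) =
      Multiset.replicate (mPart n lam 1) 1 := by
    rw [mPart, ← Multiset.filter_eq']
    apply Multiset.filter_congr
    intro k hk
    have := lam.parts_pos hk
    omega
  have e3 := lam.parts_sum
  rw [← e1, Multiset.sum_add, e2, Multiset.sum_replicate, smul_eq_mul, mul_one] at e3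
  rw [if_pos ⟨by simp; omega, fun a ha => (Multiset.mem_filter.1 ha).2⟩, Fintype.card_fin] at h
  rw [← h]
  congr 1
  have hsub : (lam.parts.filter (2 ≤ ·)).toFinset ⊆ Finset.Icc 2 n := by
    intro k hk
    rw [Multiset.mem_toFinset, Multiset.mem_filter] at hk
    exact Finset.mem_Icc.2 ⟨hk.2, lam.le_of_mem_parts hk.1⟩
  have hcount : ∀ k ∈ Finset.Icc 2 n, (lam.parts.filter (2 ≤ ·)).count k = mPart n lam k := by
    intro k hk
    rw [Multiset.count_filter_of_pos (Finset.mem_Icc.1 hk).1]; rfl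
  have hp : (lam.parts.filter (2 ≤ ·)).prod * (∏ k ∈ (lam.parts.filter (2 ≤ ·)).toFinset,
      Nat.factorial ((lam.parts.filter (2 ≤ ·)).count k)) =
      ∏ k ∈ Finset.Icc 2 n, (k ^ mPart n lam k * Nat.factorial (mPart n lam k)) := by
    rw [Finset.prod_multiset_count, ← Finset.prod_mul_distrib, Finset.prod_subset hsub]
    · exact Finset.prod_congr rfl fun k hk => by rw [hcount k hk]
    · intro k _ hk
      rw [Multiset.mem_toFinset] at hk
      simp [Multiset.count_eq_zero_of_notMem hk]
  rw [mul_assoc, hp]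
  have hm : n - (lam.parts.filter (2 ≤ ·)).sum = mPart n lam 1 := by omega
  rw [hm]
  rcases Nat.eq_zero_or_pos n with rfl | hn
  · have : mPart 0 lam 1 = 0 := by omega
    simp [this]
  · rw [← Finset.insert_Icc_add_one_left_eq_Icc hn, Finset.prod_insert (by simp)]
    simp

section act
variable {n : ℕ}

instance : Finite (DElem n) := by unfold DElem; infer_instance

instance : MulAction (Equiv.Perm (Fin n)) (DElem n) where
  smul σ x := ⟨(fun j => x.1.1 (σ⁻¹ j), fun s => x.1.2 (Sym2.map (⇑σ⁻¹) s)),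
    fun s hs => x.2 _ ((isDiag_map_iff _ _).2 hs)⟩
  one_smul x := Subtype.ext (Prod.ext rfl (by
    funext s
    show x.1.2 (Sym2.map (fun x => x) s) = x.1.2 s
    exact congrArg _ (congrFun Sym2.map_id s)))
  mul_smul σ τ x := Subtype.ext (Prod.ext (by
      funext j
      show x.1.1 ((σ * τ)⁻¹ j) = x.1.1 (τ⁻¹ (σ⁻¹ j))
      rw [mul_inv_rev]; rfl) (by
    funext s
    show x.1.2 (Sym2.map (⇑(σ * τ)⁻¹) s) = x.1.2 (Sym2.map (⇑τ⁻¹) (Sym2.map (⇑σ⁻¹) s))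
    rw [Sym2.map_map, mul_inv_rev]; rfl))

theorem smul_eq_iff (σ : Equiv.Perm (Fin n)) (x y : DElem n) : σ • x = y ↔
    (∀ j, y.1.1 j = x.1.1 (σ⁻¹ j)) ∧ (∀ s, y.1.2 s = x.1.2 (Sym2.map (⇑σ⁻¹) s)) := by
  constructor
  · rintro rfl
    exact ⟨fun _ => rfl, fun _ => rfl⟩
  · rintro ⟨h1, h2⟩
    exact Subtype.ext (Prod.ext (funext fun j => (h1 j).symm) (funext fun s => (h2 s).symm))

theorem orbitCount_eq : diagOrbitCount n =
    Nat.card (orbitRel.Quotient (Equiv.Perm (Fin n)) (DElem n)) := by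
  unfold diagOrbitCount
  have h : (fun x : DElem n => {y : DElem n | ∃ σ : Equiv.Perm (Fin n),
      (∀ j, y.1.1 j = x.1.1 (σ⁻¹ j)) ∧ (∀ s, y.1.2 s = x.1.2 (Sym2.map (⇑σ⁻¹) s))}) =
      fun x => orbit (Equiv.Perm (Fin n)) x := by
    funext x
    ext y
    simp only [Set.mem_ofPred_eq, ← smul_eq_iff]
    rfl
  rw [h]
  refine Nat.card_congr ((Setoid.quotientKerEquivRange _).symm.trans (Quotient.congrRight ?_))
  intro a b
  show orbit _ a = orbit _ b ↔ a ∈ orbit _ b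
  exact orbit_eq_iff

noncomputable def fixEquiv (σ : Equiv.Perm (Fin n)) :
    fixedBy (DElem n) σ ≃ {f : Fin n → ZMod 4 // ∀ z, f z = f (σ⁻¹ • z)} ×
      {f : Pr (Fin n) → ZMod 2 // ∀ z, f z = f (σ⁻¹ • z)} := by
  classical
  exact
  { toFun := fun x => (⟨x.1.1.1, ((smul_eq_iff σ _ _).1 x.2).1⟩,
      ⟨fun s => x.1.1.2 s.1, fun s => ((smul_eq_iff σ _ _).1 x.2).2 s.1⟩)
    invFun := fun p => ⟨⟨(p.1.1, fun s => if h : s.IsDiag then 0 else p.2.1 ⟨s, h⟩),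
        fun s hs => dif_pos hs⟩, (smul_eq_iff σ _ _).2 ⟨p.1.2, fun s => by
          by_cases h : s.IsDiag
          · have hd2 := (isDiag_map_iff σ⁻¹ s).2 h
            show (if h : s.IsDiag then 0 else p.2.1 ⟨s, h⟩) =
              if h : (Sym2.map (⇑σ⁻¹) s).IsDiag then 0 else p.2.1 ⟨Sym2.map (⇑σ⁻¹) s, h⟩
            rw [dif_pos h, dif_pos hd2]
          · have hd2 := fun hd2 => h ((isDiag_map_iff σ⁻¹ s).1 hd2)
            show (if h : s.IsDiag then 0 else p.2.1 ⟨s, h⟩) =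
              if h : (Sym2.map (⇑σ⁻¹) s).IsDiag then 0 else p.2.1 ⟨Sym2.map (⇑σ⁻¹) s, h⟩
            rw [dif_neg h, dif_neg hd2]
            exact p.2.2 ⟨s, h⟩⟩⟩
    left_inv := fun x => by
      apply Subtype.ext
      apply Subtype.ext
      refine Prod.ext rfl ?_
      funext s
      by_cases h : s.IsDiag
      · exact (dif_pos h).trans (x.1.2 s h).symm
      · exact dif_neg h
    right_inv := fun p => by
      refine Prod.ext rfl ?_
      apply Subtype.ext
      funext s
      exact dif_neg s.2 }

theorem card_fix (σ : Equiv.Perm (Fin n)) : Nat.card (fixedBy (DElem n) σ) =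
    4 ^ (∑ k ∈ Finset.Icc 1 n, mPart n (ptn σ) k) * 2 ^ fPart n (ptn σ) := by
  rw [Nat.card_congr (fixEquiv σ), Nat.card_prod, card_invFun, card_invFun, Nat.card_zmod,
    Nat.card_zmod, orbits_X]
  have h1 := orbits_Pr σ
  have h2 := fPart_eq (ptn σ)
  have hc := parts_sum_map (ptn σ) (fun _ => 1)
  simp only [Multiset.map_const', Multiset.sum_replicate, smul_eq_mul, mul_one] at hc
  rw [← hc]
  have h3 : Nat.card (orbitRel.Quotient (Subgroup.zpowers σ) (Pr (Fin n))) = fPart n (ptn σ) := by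
    have : (ptn σ).parts = σ.partition.parts := rfl
    rw [this] at h2
    omega
  rw [h3]; rfl

end act

end Orb

/-- Closed orbit-counting formula:
`|D_n / S_n| = ∑_{λ ⊢ n} (∏_k k^{m_k} m_k!)⁻¹ · 4^{∑_k m_k} · 2^{f(λ)}`. -/
theorem stmt14 (n : ℕ) :
    (diagOrbitCount n : ℚ) =
      ∑ lam : Nat.Partition n,
        (∏ k ∈ Finset.Icc 1 n,
            ((k : ℚ) ^ mPart n lam k * (Nat.factorial (mPart n lam k) : ℚ)))⁻¹ *
          4 ^ (∑ k ∈ Finset.Icc 1 n, mPart n lam k) * 2 ^ fPart n lam := by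
  classical
  have : Fintype (DElem n) := Fintype.ofFinite _
  have hb := MulAction.sum_card_fixedBy_eq_card_orbits_mul_card_group (Equiv.Perm (Fin n)) (DElem n)
  simp only [← Nat.card_eq_fintype_card, Orb.card_fix] at hb
  rw [← Finset.sum_fiberwise (g := fun σ : Equiv.Perm (Fin n) => Orb.ptn σ)] at hb
  have hb2 : ∑ lam : Nat.Partition n, (Finset.univ.filter
      (fun σ : Equiv.Perm (Fin n) => Orb.ptn σ = lam)).card *
      (4 ^ (∑ k ∈ Finset.Icc 1 n, mPart n lam k) * 2 ^ fPart n lam) =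
      diagOrbitCount n * Nat.factorial n := by
    rw [Orb.orbitCount_eq]
    refine Eq.trans ?_ (hb.trans ?_)
    · apply Finset.sum_congr rfl
      intro lam _
      rw [← smul_eq_mul, ← Finset.sum_const]
      apply Finset.sum_congr rfl
      intro σ hσ
      rw [(Finset.mem_filter.1 hσ).2]
    · congr 1
      rw [Nat.card_eq_fintype_card, Fintype.card_perm, Fintype.card_fin]
  have hn : (Nat.factorial n : ℚ) ≠ 0 := by exact_mod_cast Nat.factorial_ne_zero n
  apply mul_right_cancel₀ hn
  rw [← Nat.cast_mul, ← hb2, Finset.sum_mul, Nat.cast_sum]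
  apply Finset.sum_congr rfl
  intro lam _
  have hl := congrArg (Nat.cast : ℕ → ℚ) (Orb.card_ptn lam)
  push_cast at hl ⊢
  have hne : (∏ k ∈ Finset.Icc 1 n,
      ((k : ℚ) ^ mPart n lam k * (Nat.factorial (mPart n lam k) : ℚ))) ≠ 0 := by
    intro h0
    rw [h0, mul_zero] at hl
    exact hn hl.symm
  rw [← hl]
  field_simp
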